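/- arXiv:1601.01822 — 3 statements merged into one kernel-verified Lean document; each statement's English description precedes it below -/
import Mathlib

section
/- Let H be a subgroup of SL(2,ℝ) that is unbounded (i.e. the operator norms of its elements are not bounded above). Then H is strongly irreducible if and only if for every nonzero vector x ∈ ℝ², the set of one-dimensional subspaces { span_ℝ{Ax} : A ∈ H } of ℝ² has more than 2 elements. -/
open Matrix

/-- `SL(2,ℝ)`. -/
abbrev SL2R := Matrix.SpecialLinearGroup (Fin 2) ℝ

/-- The Euclidean norm on `ℝ²`. -/
noncomputable def vecNorm2 (v : Fin 2 → ℝ) : ℝ := Real.sqrt (v 0 ^ 2 + v 1 ^ 2)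

/-- The operator norm `‖A‖ = sup_{|x| ≤ 1} |Ax|` of a `2 × 2` real matrix, induced by the
Euclidean norm on `ℝ²`. -/
noncomputable def opNorm2 (A : Matrix (Fin 2) (Fin 2) ℝ) : ℝ :=
  sSup {r | ∃ x : Fin 2 → ℝ, vecNorm2 x ≤ 1 ∧ r = vecNorm2 (A.mulVec x)}

/-- A subgroup `H ≤ SL(2,ℝ)` is strongly irreducible if there is no nonempty finite union `S`
of one-dimensional subspaces of `ℝ²` with `A(S) = S` for every `A ∈ H`. -/
def IsStronglyIrreducible (H : Subgroup SL2R) : Prop :=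
  ¬ ∃ 𝒮 : Finset (Submodule ℝ (Fin 2 → ℝ)), 𝒮.Nonempty ∧
      (∀ W ∈ 𝒮, Module.finrank ℝ W = 1) ∧
      ∀ A ∈ H,
        (fun v => (A : Matrix (Fin 2) (Fin 2) ℝ).mulVec v) ''
            (⋃ W ∈ 𝒮, (W : Set (Fin 2 → ℝ))) =
          ⋃ W ∈ 𝒮, (W : Set (Fin 2 → ℝ))

/-- A subgroup `H ≤ SL(2,ℝ)` is unbounded if the operator norms of its elements are not
bounded above. -/
def IsUnboundedSubgroup (H : Subgroup SL2R) : Prop :=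
  ¬ ∃ C : ℝ, ∀ A ∈ H, opNorm2 (A : Matrix (Fin 2) (Fin 2) ℝ) ≤ C

lemma span_eq_of_cross {v w : Fin 2 → ℝ} (hv : v ≠ 0) (hw : w ≠ 0)
    (h : v 0 * w 1 - v 1 * w 0 = 0) :
    Submodule.span ℝ {v} = Submodule.span ℝ {w} := by
  have key : ∀ v w : Fin 2 → ℝ, w ≠ 0 → v 0 * w 1 - v 1 * w 0 = 0 →
      Submodule.span ℝ {v} ≤ Submodule.span ℝ {w} := by
    intro v w hw h
    rw [Submodule.span_singleton_le_iff_mem, Submodule.mem_span_singleton]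
    by_cases h0 : w 0 = 0
    · have h1 : w 1 ≠ 0 := by
        intro h1
        apply hw
        ext i
        fin_cases i <;> simp [h0, h1]
      refine ⟨v 1 / w 1, ?_⟩
      have hv0 : v 0 = 0 := by simpa [h0, h1] using h
      ext i
      fin_cases i <;> simp [h0, h1, hv0]
    · refine ⟨v 0 / w 0, ?_⟩
      ext i
      fin_cases i
      · simp [h0]
      · simp
        field_simp
        linarith
  exact le_antisymm (key v w hw h) (key w v hv (by linarith))

lemma mulVec_ne_zero (A : SL2R) {x : Fin 2 → ℝ} (hx : x ≠ 0) :
    (A : Matrix (Fin 2) (Fin 2) ℝ).mulVec x ≠ 0 := by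
  intro h
  apply hx
  have : ((A⁻¹ * A : SL2R) : Matrix (Fin 2) (Fin 2) ℝ).mulVec x = 0 := by
    rw [Matrix.SpecialLinearGroup.coe_mul, ← Matrix.mulVec_mulVec, h, Matrix.mulVec_zero]
  simpa using this

lemma cross_mulVec (A : SL2R) (v w : Fin 2 → ℝ) :
    (A : Matrix (Fin 2) (Fin 2) ℝ).mulVec v 0 * (A : Matrix (Fin 2) (Fin 2) ℝ).mulVec w 1
      - (A : Matrix (Fin 2) (Fin 2) ℝ).mulVec v 1 * (A : Matrix (Fin 2) (Fin 2) ℝ).mulVec w 0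
      = v 0 * w 1 - v 1 * w 0 := by
  have h := A.det_coe
  rw [Matrix.det_fin_two] at h
  simp only [Matrix.mulVec, dotProduct, Fin.sum_univ_two]
  linear_combination (v 0 * w 1 - v 1 * w 0) * h

lemma opNorm2_eq_of_three (A B : SL2R) (u v w : Fin 2 → ℝ)
    (huv : u 0 * v 1 - u 1 * v 0 ≠ 0) (huw : u 0 * w 1 - u 1 * w 0 ≠ 0)
    (hvw : v 0 * w 1 - v 1 * w 0 ≠ 0)
    (hu : (A : Matrix (Fin 2) (Fin 2) ℝ).mulVec u ∈
      Submodule.span ℝ {(B : Matrix (Fin 2) (Fin 2) ℝ).mulVec u})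
    (hv : (A : Matrix (Fin 2) (Fin 2) ℝ).mulVec v ∈
      Submodule.span ℝ {(B : Matrix (Fin 2) (Fin 2) ℝ).mulVec v})
    (hw : (A : Matrix (Fin 2) (Fin 2) ℝ).mulVec w ∈
      Submodule.span ℝ {(B : Matrix (Fin 2) (Fin 2) ℝ).mulVec w}) :
    opNorm2 (A : Matrix (Fin 2) (Fin 2) ℝ) = opNorm2 (B : Matrix (Fin 2) (Fin 2) ℝ) := by
  obtain ⟨a, ha⟩ := Submodule.mem_span_singleton.1 hu
  obtain ⟨b, hb⟩ := Submodule.mem_span_singleton.1 hv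
  obtain ⟨c, hc⟩ := Submodule.mem_span_singleton.1 hw
  have key : ∀ (s t : ℝ) (x y : Fin 2 → ℝ), x 0 * y 1 - x 1 * y 0 ≠ 0 →
      s • (B : Matrix (Fin 2) (Fin 2) ℝ).mulVec x = (A : Matrix (Fin 2) (Fin 2) ℝ).mulVec x →
      t • (B : Matrix (Fin 2) (Fin 2) ℝ).mulVec y = (A : Matrix (Fin 2) (Fin 2) ℝ).mulVec y →
      s * t = 1 := by
    intro s t x y hxy hs ht
    have hA := cross_mulVec A x y
    have hB := cross_mulVec B x y
    rw [← hs, ← ht] at hA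
    simp only [Pi.smul_apply, smul_eq_mul] at hA
    apply mul_right_cancel₀ hxy
    linear_combination hA - s * t * hB
  have hab := key a b u v huv ha hb
  have hac := key a c u w huw ha hc
  have hbc := key b c v w hvw hb hc
  have ha0 : a ≠ 0 := by
    rintro rfl
    simp at hab
  have hbc' : b = c := mul_left_cancel₀ ha0 (hab.trans hac.symm)
  subst hbc'
  have hab' : a = b := by
    have : b ≠ 0 := by
      rintro rfl
      simp at hab
    exact mul_right_cancel₀ this (hab.trans hbc.symm)
  subst hab'
  have hall : ∀ x, (A : Matrix (Fin 2) (Fin 2) ℝ).mulVec x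
      = a • (B : Matrix (Fin 2) (Fin 2) ℝ).mulVec x := by
    intro x
    have hx : x = ((x 0 * v 1 - x 1 * v 0) / (u 0 * v 1 - u 1 * v 0)) • u
        + ((u 0 * x 1 - u 1 * x 0) / (u 0 * v 1 - u 1 * v 0)) • v := by
      ext i
      fin_cases i
      · simp only [Pi.add_apply, Pi.smul_apply, smul_eq_mul, Fin.zero_eta, Fin.mk_one]
        rw [div_mul_eq_mul_div, div_mul_eq_mul_div, ← add_div, eq_div_iff huv]
        ring
      · simp only [Pi.add_apply, Pi.smul_apply, smul_eq_mul, Fin.zero_eta, Fin.mk_one]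
        rw [div_mul_eq_mul_div, div_mul_eq_mul_div, ← add_div, eq_div_iff huv]
        ring
    rw [hx]
    simp only [Matrix.mulVec_add, Matrix.mulVec_smul, ← ha, ← hb, smul_add]
    rw [smul_comm a, smul_comm a]
  have hn : ∀ x, vecNorm2 ((A : Matrix (Fin 2) (Fin 2) ℝ).mulVec x)
      = vecNorm2 ((B : Matrix (Fin 2) (Fin 2) ℝ).mulVec x) := by
    intro x
    rw [hall]
    unfold vecNorm2
    congr 1
    simp only [Pi.smul_apply, smul_eq_mul]
    linear_combination (((B : Matrix (Fin 2) (Fin 2) ℝ).mulVec x 0) ^ 2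
      + ((B : Matrix (Fin 2) (Fin 2) ℝ).mulVec x 1) ^ 2) * hab
  unfold opNorm2
  simp only [hn]

/-- Criterion for strong irreducibility: an unbounded subgroup `H ≤ SL(2,ℝ)` is strongly
irreducible if and only if, for every nonzero `x ∈ ℝ²`, the orbit
`{span{Ax} : A ∈ H}` in the projective line has more than `2` elements. -/
theorem strong_irreducibility_criterion (H : Subgroup SL2R) (hub : IsUnboundedSubgroup H) :
    IsStronglyIrreducible H ↔
      ∀ x : Fin 2 → ℝ, x ≠ 0 →
        2 < Set.encard {W : Submodule ℝ (Fin 2 → ℝ) |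
          ∃ A ∈ H, W = Submodule.span ℝ {(A : Matrix (Fin 2) (Fin 2) ℝ).mulVec x}} := by
  constructor
  · intro hirr x hx
    by_contra hle
    rw [not_lt] at hle
    have hfin : Set.Finite {W : Submodule ℝ (Fin 2 → ℝ) |
          ∃ A ∈ H, W = Submodule.span ℝ {(A : Matrix (Fin 2) (Fin 2) ℝ).mulVec x}} :=
      Set.finite_of_encard_le_coe (k := 2) hle
    apply hirr
    have hsub : ∀ A ∈ H, ∀ y, (∃ B ∈ H, y ∈ Submodule.span ℝ
        {(B : Matrix (Fin 2) (Fin 2) ℝ).mulVec x}) →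
        (∃ B ∈ H, (A : Matrix (Fin 2) (Fin 2) ℝ).mulVec y ∈ Submodule.span ℝ
        {(B : Matrix (Fin 2) (Fin 2) ℝ).mulVec x}) := by
      rintro A hA y ⟨B, hB, hy⟩
      refine ⟨A * B, H.mul_mem hA hB, ?_⟩
      obtain ⟨c, rfl⟩ := Submodule.mem_span_singleton.1 hy
      refine Submodule.mem_span_singleton.2 ⟨c, ?_⟩
      rw [Matrix.SpecialLinearGroup.coe_mul, ← Matrix.mulVec_mulVec, Matrix.mulVec_smul]
    have hmem : ∀ y, y ∈ (⋃ W ∈ hfin.toFinset, (W : Set (Fin 2 → ℝ))) ↔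
        (∃ B ∈ H, y ∈ Submodule.span ℝ {(B : Matrix (Fin 2) (Fin 2) ℝ).mulVec x}) := by
      intro y
      simp only [Set.mem_iUnion, Set.Finite.mem_toFinset, Set.mem_ofPred_eq, SetLike.mem_coe]
      constructor
      · rintro ⟨W, ⟨A, hA, rfl⟩, hy⟩
        exact ⟨A, hA, hy⟩
      · rintro ⟨A, hA, hy⟩
        exact ⟨_, ⟨A, hA, rfl⟩, hy⟩
    refine ⟨hfin.toFinset, ⟨_, hfin.mem_toFinset.2 ⟨1, H.one_mem, rfl⟩⟩, ?_, ?_⟩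
    · intro W hW
      obtain ⟨A, hA, rfl⟩ := hfin.mem_toFinset.1 hW
      exact finrank_span_singleton (mulVec_ne_zero A hx)
    · intro A hA
      ext y
      rw [Set.mem_image, hmem]
      constructor
      · rintro ⟨z, hz, rfl⟩
        exact hsub A hA z ((hmem z).1 hz)
      · intro hy
        refine ⟨((A⁻¹ : SL2R) : Matrix (Fin 2) (Fin 2) ℝ).mulVec y,
          (hmem _).2 (hsub _ (H.inv_mem hA) y hy), ?_⟩
        change (A : Matrix (Fin 2) (Fin 2) ℝ).mulVec _ = y
        rw [Matrix.mulVec_mulVec, ← Matrix.SpecialLinearGroup.coe_mul, mul_inv_cancel]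
        simp
  · rintro horb ⟨S, ⟨W, hW⟩, hS1, hS⟩
    obtain ⟨w, hw0, hwW⟩ : ∃ w : Fin 2 → ℝ, w ≠ 0 ∧ w ∈ W := by
      have hne : W ≠ ⊥ := by
        rintro rfl
        simpa using hS1 _ hW
      obtain ⟨w, hw, h0⟩ := W.exists_mem_ne_zero_of_ne_bot hne
      exact ⟨w, h0, hw⟩
    have horbS : ∀ A ∈ H,
        Submodule.span ℝ {(A : Matrix (Fin 2) (Fin 2) ℝ).mulVec w} ∈ S := by
      intro A hA
      have h1 : (A : Matrix (Fin 2) (Fin 2) ℝ).mulVec w ∈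
          ⋃ W ∈ S, (W : Set (Fin 2 → ℝ)) := by
        rw [← hS A hA]
        exact ⟨w, by simpa using ⟨W, hW, hwW⟩, rfl⟩
      simp only [Set.mem_iUnion, SetLike.mem_coe] at h1
      obtain ⟨V, hV, hAV⟩ := h1
      have : Submodule.span ℝ {(A : Matrix (Fin 2) (Fin 2) ℝ).mulVec w} = V := by
        apply Submodule.eq_of_le_of_finrank_eq
        · rwa [Submodule.span_singleton_le_iff_mem]
        · rw [hS1 V hV, finrank_span_singleton (mulVec_ne_zero A hw0)]
      rwa [this]
    have horbfin : Set.Finite {W : Submodule ℝ (Fin 2 → ℝ) |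
          ∃ A ∈ H, W = Submodule.span ℝ {(A : Matrix (Fin 2) (Fin 2) ℝ).mulVec w}} := by
      refine S.finite_toSet.subset ?_
      rintro _ ⟨A, hA, rfl⟩
      exact horbS A hA
    have h2 := horb w hw0
    rw [← horbfin.cast_ncard_eq] at h2
    obtain ⟨L₁, L₂, L₃, ⟨A, hA, rfl⟩, ⟨B, hB, rfl⟩, ⟨C, hC, rfl⟩, hAB, hAC, hBC⟩ :=
      (Set.two_lt_ncard_iff horbfin).1 (by exact_mod_cast h2)
    have hcr : ∀ A B : SL2R, Submodule.span ℝ {(A : Matrix (Fin 2) (Fin 2) ℝ).mulVec w} ≠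
        Submodule.span ℝ {(B : Matrix (Fin 2) (Fin 2) ℝ).mulVec w} → _ :=
      fun A B h h' => h (span_eq_of_cross (mulVec_ne_zero A hw0) (mulVec_ne_zero B hw0) h')
    let f : SL2R → SL2R → Submodule ℝ (Fin 2 → ℝ) := fun D M =>
      Submodule.span ℝ {(M : Matrix (Fin 2) (Fin 2) ℝ).mulVec
        ((D : Matrix (Fin 2) (Fin 2) ℝ).mulVec w)}
    have hf : ∀ D ∈ H, ∀ M ∈ H, f D M ∈ S := by
      intro D hD M hM
      have := horbS (M * D) (H.mul_mem hM hD)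
      rwa [Matrix.SpecialLinearGroup.coe_mul, ← Matrix.mulVec_mulVec] at this
    let F : H → S × S × S := fun M =>
      (⟨f A M, hf A hA M M.2⟩, ⟨f B M, hf B hB M M.2⟩, ⟨f C M, hf C hC M M.2⟩)
    let g : H → ℝ := fun M => opNorm2 ((M : SL2R) : Matrix (Fin 2) (Fin 2) ℝ)
    have hfac : Function.FactorsThrough g F := by
      intro M N hMN
      simp only [F, Prod.mk.injEq, Subtype.mk.injEq] at hMN
      obtain ⟨h1, h2, h3⟩ := hMN
      refine opNorm2_eq_of_three M N _ _ _ (hcr A B hAB) (hcr A C hAC) (hcr B C hBC) ?_ ?_ ?_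
      · exact h1.le (Submodule.mem_span_singleton_self _)
      · exact h2.le (Submodule.mem_span_singleton_self _)
      · exact h3.le (Submodule.mem_span_singleton_self _)
    have hfinr : (Set.range g).Finite := by
      have : g = Function.extend F g 0 ∘ F := by
        funext M
        exact (hfac.extend_apply 0 M).symm
      rw [this, Set.range_comp]
      exact (Set.toFinite _).image _
    obtain ⟨K, hK⟩ := hfinr.bddAbove
    exact hub ⟨K, fun M hM => hK ⟨⟨M, hM⟩, rfl⟩⟩
end

section
/- Let α ≠ 0 and β be real numbers. Then (1/(2π)) ∫₀^{2π} ln( (α·cos θ + β·sin θ)² + α⁻²·sin² θ ) dθ = ln( ((α + 1/α)² + β²) / 4 ). -/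
open Real

/-- For real `α ≠ 0` and `β`,
`(1/(2π)) ∫₀^{2π} ln((α cos θ + β sin θ)² + α⁻² sin² θ) dθ = ln(((α + 1/α)² + β²)/4)`. -/
theorem average_log_integral (α β : ℝ) (hα : α ≠ 0) :
    (1 / (2 * π)) *
        ∫ θ in (0 : ℝ)..(2 * π),
          Real.log ((α * Real.cos θ + β * Real.sin θ) ^ 2 + α⁻¹ ^ 2 * Real.sin θ ^ 2)
      = Real.log (((α + 1 / α) ^ 2 + β ^ 2) / 4) := by
  obtain ⟨γ, hγ⟩ : ∃ γ, γ = α⁻¹ := ⟨_, rfl⟩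
  have h1 : α * γ = 1 := by rw [hγ]; exact mul_inv_cancel₀ hα
  rw [one_div α, ← hγ]
  set g : ℂ → ℂ := fun z => ⟨(α + γ) / 2, β / 2⟩ + ⟨(α - γ) / 2, -β / 2⟩ * z ^ 2 with hg
  have hga : AnalyticOnNhd ℂ g (Metric.closedBall 0 |1|) := by
    intro z _
    simp only [hg]
    fun_prop
  have hg0 : ∀ u ∈ Metric.closedBall (0 : ℂ) |1|, g u ≠ 0 := by
    intro u hu h
    have hu' : ‖u‖ ≤ 1 := by simpa using hu
    have e : (⟨(α + γ) / 2, β / 2⟩ : ℂ) = -(⟨(α - γ) / 2, -β / 2⟩ * u ^ 2) :=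
      eq_neg_of_add_eq_zero_left h
    have e2 := congrArg (fun z => ‖z‖ ^ 2) e
    simp only [norm_neg, norm_mul, norm_pow, mul_pow] at e2
    rw [Complex.sq_norm, Complex.sq_norm, Complex.normSq_mk, Complex.normSq_mk] at e2
    have hb : (‖u‖ ^ 2) ^ 2 ≤ 1 := pow_le_one₀ (by positivity) (pow_le_one₀ (norm_nonneg _) hu')
    have hc : 0 ≤ (α - γ) / 2 * ((α - γ) / 2) + -β / 2 * (-β / 2) := by
      nlinarith [sq_nonneg (α - γ), sq_nonneg β]
    nlinarith [mul_le_mul_of_nonneg_left hb hc]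
  have key := hga.circleAverage_log_norm_of_ne_zero hg0
  have hpt : ∀ θ : ℝ, Real.log ((α * Real.cos θ + β * Real.sin θ) ^ 2 + γ ^ 2 * Real.sin θ ^ 2)
      = 2 * Real.log ‖g (circleMap 0 1 θ)‖ := by
    intro θ
    have : 2 * Real.log ‖g (circleMap 0 1 θ)‖ = Real.log (‖g (circleMap 0 1 θ)‖ ^ 2) := by
      rw [Real.log_pow]; norm_num
    rw [this, Complex.sq_norm]
    congr 1
    have hw : circleMap 0 1 θ = ⟨Real.cos θ, Real.sin θ⟩ := by
      apply Complex.ext <;> simp [circleMap, Complex.exp_ofReal_mul_I_re, Complex.exp_ofReal_mul_I_im]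
    have hcs := Real.sin_sq_add_cos_sq θ
    have hfac : g (circleMap 0 1 θ) = ⟨Real.cos θ, Real.sin θ⟩ *
        ⟨α * Real.cos θ + β * Real.sin θ, -(γ * Real.sin θ)⟩ := by
      rw [hw]
      apply Complex.ext
      · simp [hg, pow_two]
        linear_combination (-(α + γ) / 2) * hcs
      · simp [hg, pow_two]
        linear_combination (-β / 2) * hcs
    rw [hfac, Complex.normSq_mul, Complex.normSq_mk, Complex.normSq_mk]
    linear_combination (-((α * Real.cos θ + β * Real.sin θ) ^ 2 + γ ^ 2 * Real.sin θ ^ 2)) * hcs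
  simp_rw [hpt]
  rw [intervalIntegral.integral_const_mul]
  rw [Real.circleAverage_def, smul_eq_mul] at key
  have : (((α + γ) ^ 2 + β ^ 2) / 4) = ‖g 0‖ ^ 2 := by
    rw [Complex.sq_norm]; simp [hg, Complex.normSq_mk]; ring
  rw [this, Real.log_pow, ← key]
  push_cast
  rw [one_div]; ring
end

section
/- Let σ > 0 and E ∈ ℝ. Then ∫_{−∞}^{∞} e^{−(2/σ)(z³/3 + E·z)} ( ∫_{−∞}^{z} e^{(2/σ)(t³/3 + E·t)} dt ) dz = (σ/2)·√(2π/σ)·∫₀^{∞} u^{−1/2}·e^{−(2/σ)(u³/12 + E·u)} du, all three integrals being finite. -/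
open Real MeasureTheory Set

lemma halp_gauss (c w u E : ℝ) (z : ℝ) :
    rexp (-c * (z ^ 3 / 3 + E * z)) * rexp (c * ((z - u) ^ 3 / 3 + E * (z - u))) =
      rexp (-(c * u) * (z - u / 2) ^ 2) * rexp (-c * (u ^ 3 / 12 + E * u)) := by
  rw [← Real.exp_add, ← Real.exp_add]
  congr 1
  ring

lemma halp_int (c E : ℝ) (hc : 0 < c) : IntegrableOn (fun u : ℝ =>
      u ^ (-(1 / 2 : ℝ)) * Real.exp (-c * (u ^ 3 / 12 + E * u))) (Ioi 0) volume := by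
  have h0 := (integrableOn_rpow_mul_exp_neg_mul_rpow (p := 1) (s := -(1 / 2 : ℝ)) (b := c)
    (by norm_num) one_pos hc)
  set m : ℝ := 2 * √|1 - E| with hm
  have hm0 : 0 ≤ m := by positivity
  have hm2 : m ^ 2 = 4 * |1 - E| := by
    rw [hm, mul_pow, Real.sq_sqrt (abs_nonneg _)]; norm_num
  refine Integrable.mono' (h0.const_mul (rexp (c * (m ^ 3 / 6)))) ?_ ?_
  · exact (by fun_prop : Measurable (fun u : ℝ =>
      u ^ (-(1 / 2 : ℝ)) * Real.exp (-c * (u ^ 3 / 12 + E * u)))).aestronglyMeasurable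
  · filter_upwards [ae_restrict_mem measurableSet_Ioi] with u hu
    have hu : 0 < u := hu
    rw [Real.norm_of_nonneg (by positivity), mul_left_comm, ← Real.exp_add, Real.rpow_one]
    gcongr
    have h1 : 0 ≤ (u - m) ^ 2 * (u + 2 * m) := by positivity
    have h2 : (1 - E) * u ≤ |1 - E| * u := by gcongr; exact le_abs_self _
    have h3 : u - m ^ 3 / 6 ≤ u ^ 3 / 12 + E * u := by
      have : m ^ 2 * u = 4 * (|1 - E| * u) := by rw [hm2]; ring
      nlinarith
    nlinarith

lemma halp_shift (g : ℝ → ℝ) (z : ℝ) :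
    ∫ t in Iic z, g t = ∫ u in Ioi (0 : ℝ), g (z - u) := by
  rw [← integral_Ici_eq_integral_Ioi, ← integral_indicator measurableSet_Iic,
    ← integral_indicator measurableSet_Ici, ← integral_sub_left_eq_self _ volume z]
  congr 1
  ext u
  simp [indicator]

lemma halp_shift_int (g : ℝ → ℝ) (z : ℝ) (h : IntegrableOn (fun u => g (z - u)) (Ioi 0)) :
    IntegrableOn g (Iic z) := by
  rw [← integrableOn_Ici_iff_integrableOn_Ioi, ← integrable_indicator_iff measurableSet_Ici] at h
  rw [← integrable_indicator_iff measurableSet_Iic]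
  have := h.comp_sub_left z
  refine this.congr (Filter.Eventually.of_forall fun u => ?_)
  simp [indicator]

lemma halp_gint (b u : ℝ) (hb : 0 < b) :
    Integrable (fun z : ℝ => rexp (-b * (z - u / 2) ^ 2)) ∧
    ∫ z : ℝ, rexp (-b * (z - u / 2) ^ 2) = √(π / b) :=
  ⟨(integrable_exp_neg_mul_sq hb).comp_sub_right (u / 2), by
    rw [integral_sub_right_eq_self (fun z : ℝ => rexp (-b * z ^ 2)) (u / 2), integral_gaussian]⟩



/-- Normalisation of Halperin's stationary Riccati density for the white-noise potential:
`∫_{−∞}^{∞} e^{−(2/σ)(z³/3+Ez)} (∫_{−∞}^{z} e^{(2/σ)(t³/3+Et)} dt) dz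
  = (σ/2)·√(2π/σ)·∫₀^{∞} u^{−1/2} e^{−(2/σ)(u³/12+Eu)} du`, all three integrals being finite. -/
theorem halperin_normalisation (σ E : ℝ) (hσ : 0 < σ) :
    (∀ z : ℝ, IntegrableOn (fun t => Real.exp ((2 / σ) * (t ^ 3 / 3 + E * t))) (Iic z) volume) ∧
    Integrable (fun z =>
      Real.exp (-(2 / σ) * (z ^ 3 / 3 + E * z)) *
        ∫ t in Iic z, Real.exp ((2 / σ) * (t ^ 3 / 3 + E * t))) volume ∧
    IntegrableOn (fun u : ℝ =>
      u ^ (-(1 / 2 : ℝ)) * Real.exp (-(2 / σ) * (u ^ 3 / 12 + E * u))) (Ioi 0) volume ∧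
    (∫ z : ℝ, Real.exp (-(2 / σ) * (z ^ 3 / 3 + E * z)) *
        ∫ t in Iic z, Real.exp ((2 / σ) * (t ^ 3 / 3 + E * t))) =
      (σ / 2) * Real.sqrt (2 * π / σ) *
        ∫ u in Ioi (0 : ℝ), u ^ (-(1 / 2 : ℝ)) * Real.exp (-(2 / σ) * (u ^ 3 / 12 + E * u)) := by
  have hc : 0 < 2 / σ := by positivity
  set c := 2 / σ with hcdef
  set F : ℝ → ℝ → ℝ := fun z u =>
    rexp (-c * (z ^ 3 / 3 + E * z)) * rexp (c * ((z - u) ^ 3 / 3 + E * (z - u))) with hF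
  have hconst : (σ / 2) * √(2 * π / σ) = √(π / c) := by
    rw [hcdef, show π / (2 / σ) = (σ / 2) ^ 2 * (2 * π / σ) by field_simp,
      Real.sqrt_mul (by positivity), Real.sqrt_sq (by positivity)]
  have hI := halp_int c E hc
  have hz : ∀ u ∈ Ioi (0 : ℝ), Integrable (fun z => F z u) ∧
      ∫ z, F z u = √(π / c) * (u ^ (-(1 / 2 : ℝ)) * Real.exp (-c * (u ^ 3 / 12 + E * u))) := by
    intro u hu
    have hu : 0 < u := hu
    obtain ⟨h1, h2⟩ := halp_gint (c * u) u (by positivity)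
    simp only [hF, halp_gauss c 0 u E]
    refine ⟨h1.mul_const _, ?_⟩
    rw [integral_mul_const, h2, ← mul_assoc, ← div_div, Real.sqrt_div' _ hu.le,
      Real.rpow_neg hu.le, ← Real.sqrt_eq_rpow, div_eq_mul_inv]
  have hprod : Integrable (Function.uncurry F) (volume.prod (volume.restrict (Ioi 0))) := by
    rw [integrable_prod_iff' (by
      apply Continuous.aestronglyMeasurable
      simp only [hF, Function.uncurry_def]
      fun_prop)]
    constructor
    · filter_upwards [ae_restrict_mem measurableSet_Ioi] with u hu using (hz u hu).1
    · refine (hI.const_mul √(π / c)).congr ?_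
      filter_upwards [ae_restrict_mem measurableSet_Ioi] with u hu
      rw [← (hz u hu).2]
      refine integral_congr_ae (Filter.Eventually.of_forall fun z => ?_)
      exact (Real.norm_of_nonneg (by simp only [hF, Function.uncurry_def]; positivity)).symm
  have hinner : ∀ z, rexp (-c * (z ^ 3 / 3 + E * z)) *
      ∫ t in Iic z, rexp (c * (t ^ 3 / 3 + E * t)) = ∫ u in Ioi 0, F z u := by
    intro z
    rw [halp_shift, ← integral_const_mul]
  refine ⟨?_, ?_, hI, ?_⟩
  · intro z
    have hae := hprod.prod_right_ae
    obtain ⟨z', hz', hzz⟩ : ∃ z', Integrable (fun u => F z' u) (volume.restrict (Ioi 0)) ∧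
        z < z' := by
      by_contra! hcon
      have hs : volume (Ioi z) = 0 := by
        refine measure_mono_null ?_ (ae_iff.1 hae)
        intro x hx hx'
        exact absurd (hcon x hx') (not_le.2 hx)
      simp at hs
    refine IntegrableOn.mono_set ?_ (Iic_subset_Iic.2 hzz.le)
    apply halp_shift_int
    refine (hz'.const_mul (rexp (-c * (z' ^ 3 / 3 + E * z')))⁻¹).congr
      (Filter.Eventually.of_forall fun u => ?_)
    simp only [hF]
    rw [inv_mul_cancel_left₀ (Real.exp_ne_zero _)]
  · simp only [hinner]
    exact hprod.integral_prod_left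
  · simp only [hinner]
    rw [hconst, integral_integral_swap hprod, ← integral_const_mul]
    exact setIntegral_congr_fun measurableSet_Ioi fun u hu => (hz u hu).2
end
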